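/- The logit sales probability is nonincreasing in the own offer price when the price-sensitive coefficients are nonpositive: fix K ≥ 1, a competitor price vector p ∈ ℝ^K, and coefficients β ∈ ℝ^5 with β₂ ≤ 0, β₃ ≤ 0, and β₅ ≤ 0. Then for all real prices a ≤ a', P̂(a', p) ≤ P̂(a, p). -/

import Mathlib

open scoped Classical

/-- The price rank of the own offer price `a` within the competitors' prices `p`:
`r(a,p) = 1 + card{k : p k < a} + 0.5 · card{k : p k = a}`. -/
noncomputable def priceRank (K : ℕ) (p : Fin K → ℝ) (a : ℝ) : ℝ :=
  1 + ((Finset.univ.filter (fun k => p k < a)).card : ℝ)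
    + 0.5 * ((Finset.univ.filter (fun k => p k = a)).card : ℝ)

/-- The linear combination `x(a,p)'β` of the regressors
`x₁ = 1`, `x₂ = r(a,p)`, `x₃ = a − min_k p_k`, `x₄ = K`, `x₅ = (a + Σ_k p_k)/(1+K)`. -/
noncomputable def logitScore (K : ℕ) (hK : 0 < K) (β : Fin 5 → ℝ) (p : Fin K → ℝ)
    (a : ℝ) : ℝ :=
  β 0 * 1 + β 1 * priceRank K p a
    + β 2 * (a - Finset.univ.inf'
        (Finset.univ_nonempty_iff.mpr (Fin.pos_iff_nonempty.mp hK)) p)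
    + β 3 * (K : ℝ) + β 4 * ((a + ∑ k, p k) / (1 + (K : ℝ)))

/-- The logit sales probability `P̂(a,p) = e^{x'β}/(1 + e^{x'β})`. -/
noncomputable def logitProb (K : ℕ) (hK : 0 < K) (β : Fin 5 → ℝ) (p : Fin K → ℝ)
    (a : ℝ) : ℝ :=
  Real.exp (logitScore K hK β p a) / (1 + Real.exp (logitScore K hK β p a))

section Counting

variable {ι α : Type*} (s : Finset ι) (f : ι → α)

theorem monotone_card_filter_lt [Preorder α] [DecidableLT α] :
    Monotone fun a => (s.filter (f · < a)).card := fun _ _ hab =>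
  Finset.card_le_card <| Finset.monotone_filter_right s fun _ _ hk => hk.trans_le hab

theorem monotone_card_filter_le [Preorder α] [DecidableLE α] :
    Monotone fun a => (s.filter (f · ≤ a)).card := fun _ _ hab =>
  Finset.card_le_card <| Finset.monotone_filter_right s fun _ _ hk => hk.trans hab

theorem card_filter_lt_add_card_filter_eq [PartialOrder α] [DecidableEq α] [DecidableLT α]
    [DecidableLE α] (a : α) :
    (s.filter (f · < a)).card + (s.filter (f · = a)).card = (s.filter (f · ≤ a)).card := by
  have hdisj : Disjoint (s.filter (f · < a)) (s.filter (f · = a)) :=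
    Finset.disjoint_filter.mpr fun _ _ => ne_of_lt
  rw [← Finset.card_union_of_disjoint hdisj, ← Finset.filter_or]
  simp only [le_iff_lt_or_eq]

end Counting

-- A tie carries half the weight of a cheaper competitor, so the rank averages the strict and the
-- weak counts; unlike the tie count, both of these are monotone in `a`.
theorem priceRank_eq_one_add_card_lt_add_card_le_div_two (K : ℕ) (p : Fin K → ℝ) (a : ℝ) :
    priceRank K p a = 1 + (((Finset.univ.filter (p · < a)).card : ℝ)
      + (Finset.univ.filter (p · ≤ a)).card) / 2 := by
  rw [priceRank, ← card_filter_lt_add_card_filter_eq Finset.univ p a, Nat.cast_add]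
  ring

theorem priceRank_monotone (K : ℕ) (p : Fin K → ℝ) : Monotone (priceRank K p) := by
  intro a b hab
  have hlt := monotone_card_filter_lt Finset.univ p hab
  have hle := monotone_card_filter_le Finset.univ p hab
  simp only [priceRank_eq_one_add_card_lt_add_card_le_div_two]
  gcongr 1 + (Nat.cast ?_ + Nat.cast ?_) / 2

theorem logitScore_antitone (K : ℕ) (hK : 0 < K) (β : Fin 5 → ℝ) (p : Fin K → ℝ)
    (hβ2 : β 1 ≤ 0) (hβ3 : β 2 ≤ 0) (hβ5 : β 4 ≤ 0) : Antitone (logitScore K hK β p) := by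
  have hrank : Antitone fun a => β 1 * priceRank K p a :=
    (priceRank_monotone K p).const_mul_of_nonpos hβ2
  have hgap (m : ℝ) : Antitone fun a => β 2 * (a - m) :=
    Monotone.const_mul_of_nonpos (fun _ _ hab => sub_le_sub_right hab m) hβ3
  have hmean (t : ℝ) : Antitone fun a => β 4 * ((a + t) / (1 + (K : ℝ))) :=
    ((monotone_id.add_const t).div_const (by positivity)).const_mul_of_nonpos hβ5
  exact (((hrank.const_add (β 0 * 1)).add (hgap _)).add_const (β 3 * K)).add (hmean _)

theorem logitProb_eq_sigmoid (K : ℕ) (hK : 0 < K) (β : Fin 5 → ℝ) (p : Fin K → ℝ) (a : ℝ) :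
    logitProb K hK β p a = Real.sigmoid (logitScore K hK β p a) := by
  rw [logitProb, Real.sigmoid_def, Real.exp_neg]
  field_simp
  ring

/-- The logit sales probability is nonincreasing in the own offer price when the
price-sensitive coefficients `β₂, β₃, β₅` are nonpositive. -/
theorem logitProb_antitone (K : ℕ) (hK : 0 < K) (β : Fin 5 → ℝ) (p : Fin K → ℝ)
    (hβ2 : β 1 ≤ 0) (hβ3 : β 2 ≤ 0) (hβ5 : β 4 ≤ 0)
    (a a' : ℝ) (h : a ≤ a') :
    logitProb K hK β p a' ≤ logitProb K hK β p a := by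
  rw [logitProb_eq_sigmoid, logitProb_eq_sigmoid]
  exact Real.sigmoid_le (logitScore_antitone K hK β p hβ2 hβ3 hβ5 h)
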